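/- Let G be a nontrivial finite group with a nonaxial 3D-rotation module. Then G is isomorphic to Alt(4), Sym(4), or Alt(5), and the centralizer of each axis is cyclic. -/

import Mathlib

open Pointwise

/-- A 3D-rotation module: each nontrivial `g` has a nontrivial axis `A_g ≤ V` such that
(1) `h • A_g = A_{hgh⁻¹}`, (2) `h` centralizes `A_g` iff `A_h = A_g`, and
(3) elements of `N_G(A_g) \ C_G(A_g)` invert `A_g`. -/
structure Rotation3DModule (G : Type*) [Group G] (V : Type*) [AddCommGroup V]
    [DistribMulAction G V] where
  axis : G → AddSubgroup V
  axis_ne_bot : ∀ g : G, g ≠ 1 → axis g ≠ ⊥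
  axis_conj : ∀ g h : G, g ≠ 1 → h ≠ 1 → h • axis g = axis (h * g * h⁻¹)
  cent_iff : ∀ g h : G, g ≠ 1 → h ≠ 1 → ((∀ v ∈ axis g, h • v = v) ↔ axis h = axis g)
  norm_inverts : ∀ g h : G, g ≠ 1 → h ≠ 1 → h • axis g = axis g →
    ¬ (∀ v ∈ axis g, h • v = v) → ∀ v ∈ axis g, h • v = -v

/-- The centralizer `C_G(A)` of a subgroup `A ≤ V` inside `G`. -/
def axisCent (G : Type*) [Group G] {V : Type*} [AddCommGroup V] [DistribMulAction G V]
    (A : AddSubgroup V) : Subgroup G where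
  carrier := {h : G | ∀ v ∈ A, h • v = v}
  one_mem' := fun v _ => one_smul G v
  mul_mem' := by
    intro a b ha hb v hv
    rw [mul_smul, hb v hv, ha v hv]
  inv_mem' := by
    intro a ha v hv
    conv_lhs => rw [← ha v hv]
    rw [inv_smul_smul]

/-- The normalizer `N_G(A)` of a subgroup `A ≤ V` inside `G`, i.e. the stabilizer of `A`
under the pointwise action of `G` on subgroups of `V`. -/
def axisNorm (G : Type*) [Group G] {V : Type*} [AddCommGroup V] [DistribMulAction G V]
    (A : AddSubgroup V) : Subgroup G := MulAction.stabilizer G A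

/-!
Call the fixed group `C_G(A)` of an axis `A` the group of rotations about `A`. These groups
partition the nontrivial elements of `G`, and each has index one or two in the stabilizer of its
axis. Giving each axis two poles, exchanged by the elements that invert it, and counting pairs of a
nontrivial rotation and a pole of its axis yields the Riemann–Hurwitz equation
`∑ (1 - 1 / p) = 2 - 2 / |G|`, where the sum runs over the orbits of poles and `p` is the order of
the group of rotations about a pole of the orbit. Its solutions are the cyclic type, with two poles
fixed by `G`, and the spherical triples `(2, 2, r)`, `(2, 3, 3)`, `(2, 3, 4)` and `(2, 3, 5)`.
The cyclic type and `(2, 2, r)` would leave an axis invariant. In the next two cases `G` acts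
faithfully on four axes of order three. In the last case the class equation shows that `G` is
simple, and `G` acts on the five conjugates of a Klein four-group, the stabilizer of an axis of
order two. The groups of rotations have prime order, except those of order four in `Sym(4)`,
which are generated by four-cycles.
-/

open MulAction

section Recognition

variable {G Y : Type*} [Group G] [Finite Y] {n : ℕ} {f : G →* Equiv.Perm Y}

lemma nonempty_mulEquiv_perm_fin (hf : Function.Injective f) (hY : Nat.card Y = n)
    (hG : Nat.card G = n.factorial) : Nonempty (G ≃* Equiv.Perm (Fin n)) := by
  have e : Y ≃ Fin n := Finite.equivFinOfCardEq hY
  have hcard : Nat.card (Equiv.Perm Y) ≤ Nat.card G := by rw [Nat.card_perm, hY, hG]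
  have hbij : Function.Bijective f := hf.bijective_of_nat_card_le hcard
  exact ⟨(MulEquiv.ofBijective f hbij).trans e.permCongrHom⟩

lemma nonempty_mulEquiv_alternatingGroup_fin (hf : Function.Injective f) (hY : Nat.card Y = n)
    (hG : 2 * Nat.card G = n.factorial) : Nonempty (G ≃* alternatingGroup (Fin n)) := by
  have e : Y ≃ Fin n := Finite.equivFinOfCardEq hY
  let φ : G →* Equiv.Perm (Fin n) := e.permCongrHom.toMonoidHom.comp f
  have hφ : Function.Injective φ := e.permCongrHom.injective.comp hf
  have hcard : Nat.card φ.range = Nat.card G := Nat.card_congr (φ.ofInjective hφ).toEquiv.symm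
  have hindex : φ.range.index = 2 := by
    have hmul := φ.range.card_mul_index
    rw [hcard, Nat.card_perm, Nat.card_fin, ← hG, mul_comm 2] at hmul
    have hpos : 0 < Nat.card G := by have := n.factorial_pos; omega
    exact Nat.eq_of_mul_eq_mul_left hpos hmul
  rw [← Equiv.Perm.eq_alternatingGroup_of_index_eq_two hindex]
  exact ⟨φ.ofInjective hφ⟩

end Recognition

theorem nonempty_mulEquiv_alternatingGroup_five_of_normalizer_ne {G : Type*} [Group G]
    [IsSimpleGroup G] (hG : Nat.card G = 60) {S : Subgroup G} (hS : Nat.card S = 4)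
    (hne : Subgroup.normalizer (S : Set G) ≠ S) : Nonempty (G ≃* alternatingGroup (Fin 5)) := by
  have : Finite G := Nat.finite_of_card_ne_zero (by omega)
  set H := Subgroup.normalizer (S : Set G)
  have hH : H ≠ ⊤ := fun htop ↦ by
    have hnormal : S.Normal := Subgroup.normalizer_eq_top_iff.mp htop
    rcases hnormal.eq_bot_or_eq_top with rfl | rfl <;> simp_all
  have hfaithful : Function.Injective (toPermHom G (G ⧸ H)) := by
    rw [← MonoidHom.ker_eq_bot_iff, ← Subgroup.normalCore_eq_ker]
    refine (Subgroup.normalCore_normal H).eq_bot_or_eq_top.resolve_right fun htop ↦ hH ?_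
    exact top_unique (htop ▸ H.normalCore_le)
  have hle : 60 ≤ H.index.factorial := by
    have := Nat.card_le_card_of_injective _ hfaithful
    rwa [hG, Nat.card_perm] at this
  have hlt : Nat.card S < Nat.card H := by
    by_contra! hge
    exact hne (Subgroup.eq_of_le_of_card_ge Subgroup.le_normalizer hge).symm
  have hdvd : 4 ∣ Nat.card H := hS ▸ Subgroup.card_dvd_of_le Subgroup.le_normalizer
  have hindex : H.index = 5 := by
    have hmul := hG ▸ H.card_mul_index
    obtain ⟨k, hk⟩ := hdvd
    have hk2 : 2 ≤ k := by omega
    have hmul' : k * H.index = 15 := by rw [hk, mul_assoc] at hmul; omega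
    have hlt8 : H.index < 8 := by nlinarith
    interval_cases H.index <;> first | rfl | omega | simp [Nat.factorial] at hle
  exact nonempty_mulEquiv_alternatingGroup_fin hfaithful hindex (by rw [hG]; rfl)

lemma isCyclic_of_card_prime {H : Type*} [Group H] (hH : (Nat.card H).Prime) : IsCyclic H :=
  have := Fact.mk hH
  isCyclic_of_prime_card rfl

lemma orderOf_finRotate (n : ℕ) : orderOf (finRotate (n + 2)) = n + 2 := by
  rw [isCycle_finRotate.orderOf, support_finRotate, Finset.card_univ, Fintype.card_fin]

lemma le_center_of_card_le_two {G : Type*} [Group G] {K : Subgroup G} [Finite K] [K.Normal]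
    (hK : Nat.card K ≤ 2) : K ≤ Subgroup.center G := by
  intro k hk
  rw [Subgroup.mem_center_iff]
  intro g
  by_cases hk1 : k = 1
  · rw [hk1, mul_one, one_mul]
  have : Nontrivial K := K.nontrivial_iff_exists_ne_one.mpr ⟨k, hk, hk1⟩
  have h2 : Nat.card K = 2 := hK.antisymm Finite.one_lt_card
  have hconj : g * k * g⁻¹ ∈ K := Subgroup.Normal.conj_mem ‹_› k hk g
  have heq := ((Nat.card_eq_two_iff' (1 : K)).mp h2).unique (y₁ := ⟨g * k * g⁻¹, hconj⟩)
    (y₂ := ⟨k, hk⟩) (by simpa using hk1) (by simpa using hk1)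
  exact mul_inv_eq_iff_eq_mul.mp (congrArg Subtype.val heq)

section Orbits

lemma card_orbit_mul_card_stabilizer (G : Type*) {X : Type*} [Group G] [MulAction G X] (x : X) :
    Nat.card (orbit G x) * Nat.card (stabilizer G x) = Nat.card G := by
  rw [← Nat.card_prod]
  exact Nat.card_congr (orbitProdStabilizerEquivGroup G x)

lemma one_lt_card_orbit {G X : Type*} [Group G] [Finite G] [MulAction G X]
    (hfix : fixedPoints G X = ∅) (x : X) : 1 < Nat.card (orbit G x) := by
  have : Finite (orbit G x) := Set.finite_range _
  rw [Finite.one_lt_card_iff_nontrivial, Set.nontrivial_coe_sort, ← Set.not_subsingleton_iff,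
    subsingleton_orbit_iff_mem_fixedPoints, hfix]
  exact Set.notMem_empty x

lemma out_mem_orbit {G X : Type*} [Group G] [MulAction G X] (x : X) :
    (⟦x⟧ : orbitRel.Quotient G X).out ∈ orbit G x :=
  Quotient.mk_out (s := orbitRel G X) x

lemma sum_eq_sum_card_orbit_nsmul {G X M : Type*} [Group G] [MulAction G X] [Fintype X]
    [Fintype (orbitRel.Quotient G X)] [AddCommMonoid M] {f : X → M}
    (hf : ∀ (g : G) (x : X), f (g • x) = f x) :
    ∑ x, f x = ∑ w : orbitRel.Quotient G X, Nat.card (orbit G w.out) • f w.out := by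
  classical
  rw [← (selfEquivSigmaOrbits G X).symm.sum_comp, Fintype.sum_sigma]
  refine Finset.sum_congr rfl fun w _ ↦ ?_
  rw [Nat.card_eq_fintype_card, ← Finset.card_univ, ← Finset.sum_const]
  refine Finset.sum_congr rfl ?_
  rintro ⟨_, h, rfl⟩ -
  exact hf h w.out

end Orbits

section SphericalTriples

open ADEInequality

lemma sumInv_finsetSum {ι : Type*} (s : Finset ι) (T : ι → Multiset ℕ+) :
    sumInv (∑ i ∈ s, T i) = ∑ i ∈ s, sumInv (T i) :=
  map_sum (Multiset.sumAddMonoidHom.comp (Multiset.mapAddMonoidHom fun p : ℕ+ ↦ (p : ℚ)⁻¹)) T s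

lemma sumInv_replicate (k : ℕ) (p : ℕ+) : sumInv (.replicate k p) = k * (p : ℚ)⁻¹ := by
  simp only [sumInv, Multiset.map_replicate, Multiset.sum_replicate, nsmul_eq_mul]

variable {n : ℕ} {T : Multiset ℕ+}

lemma card_eq_three_of_card_sub_sumInv_eq (hn : 1 < n) (h2 : ∀ p ∈ T, 2 ≤ p)
    (hT : ∀ p ∈ T, 2 * (p : ℕ) ≤ n) (h : (T.card : ℚ) - sumInv T = 2 - 2 / n) : T.card = 3 := by
  have hn' : (1 : ℚ) < n := by exact_mod_cast hn
  have hupper : sumInv T ≤ T.card * 2⁻¹ := by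
    have := Multiset.sum_le_card_nsmul (T.map fun p : ℕ+ ↦ (p : ℚ)⁻¹) 2⁻¹ fun x hx ↦ by
      obtain ⟨p, hp, rfl⟩ := Multiset.mem_map.mp hx
      exact inv_anti₀ two_pos (by exact_mod_cast h2 p hp)
    simpa [sumInv] using this
  have hlower : T.card * (2 / n : ℚ) ≤ sumInv T := by
    have := Multiset.card_nsmul_le_sum (s := T.map fun p : ℕ+ ↦ (p : ℚ)⁻¹) (a := 2 / n)
        fun x hx ↦ by
      obtain ⟨p, hp, rfl⟩ := Multiset.mem_map.mp hx
      have hp' : 2 * (p : ℚ) ≤ n := by exact_mod_cast hT p hp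
      rw [div_le_iff₀ (by linarith), ← div_eq_inv_mul, le_div_iff₀ (by simp)]
      exact hp'
    simpa [sumInv] using this
  have hdiv : (0 : ℚ) < 2 / n := by positivity
  have hdiv' : (2 : ℚ) / n ≤ 1 := by
    rw [div_le_one (by linarith)]
    exact_mod_cast hn
  have hlt : (T.card : ℚ) < 4 := by linarith
  have hgt : (2 : ℚ) < T.card := by
    by_contra! hle
    nlinarith
  have : T.card < 4 := by exact_mod_cast hlt
  have : 2 < T.card := by exact_mod_cast hgt
  omega

theorem spherical_triple_of_card_sub_sumInv_eq (hn : 1 < n) (h2 : ∀ p ∈ T, 2 ≤ p)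
    (hT : ∀ p ∈ T, 2 * (p : ℕ) ≤ n) (h : (T.card : ℚ) - sumInv T = 2 - 2 / n) :
    (∃ r : ℕ+, T = {2, 2, r} ∧ 2 * (r : ℕ) = n) ∨ (T = {2, 3, 3} ∧ n = 12) ∨
      (T = {2, 3, 4} ∧ n = 24) ∨ (T = {2, 3, 5} ∧ n = 60) := by
  have hcard := card_eq_three_of_card_sub_sumInv_eq hn h2 hT h
  obtain ⟨p, q, r, rfl⟩ := Multiset.card_eq_three.mp hcard
  have hn0 : (n : ℚ) ≠ 0 := by positivity
  have hsum : sumInv {p, q, r} = 1 + 2 / n := by rw [hcard] at h; push_cast at h; linarith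
  have hadm : Admissible {p, q, r} := by
    rw [← classification, hsum]
    have : (0 : ℚ) < 2 / n := by positivity
    linarith
  have hn_eq : (n : ℚ) = 2 / (sumInv {p, q, r} - 1) := by
    rw [hsum, add_sub_cancel_left, div_div_cancel₀ two_ne_zero]
  obtain ⟨a, b, hA⟩ | ⟨a, hD⟩ | hE | hE | hE := hadm
  · have h1 : (1 : ℕ+) ∈ ({p, q, r} : Multiset ℕ+) := by
      rw [← hA]; simp [A']
    simpa using h2 1 h1
  · refine .inl ⟨a, hD.symm, ?_⟩
    rw [← hD, D', sumInv_pqr] at hn_eq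
    have h2a : (n : ℚ) = 2 * a := by rw [hn_eq]; norm_num
    exact_mod_cast h2a.symm
  all_goals
    rw [← hE, E', sumInv_pqr] at hn_eq
    norm_num at hn_eq
  · exact .inr (.inl ⟨hE.symm, by exact_mod_cast hn_eq⟩)
  · exact .inr (.inr (.inl ⟨hE.symm, by exact_mod_cast hn_eq⟩))
  · exact .inr (.inr (.inr ⟨hE.symm, by exact_mod_cast hn_eq⟩))

end SphericalTriples

/-- The abstract form of the system of rotation groups about the axes of a group of rotations:
`X` is the set of axes, permuted by `G`, and `C x` is the group of rotations about the axis `x`.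
These groups partition the nontrivial elements of `G`, and a rotation that maps the axis `x` to
itself without being a rotation about it reverses it, so that `C x` has index at most two in the
stabilizer of `x`. -/
structure IsRotationPartition {G X : Type*} [Group G] [MulAction G X] (C : X → Subgroup G) :
    Prop where
  existsUnique_mem : ∀ g ≠ 1, ∃! x, g ∈ C x
  ne_bot : ∀ x, C x ≠ ⊥
  smul_eq : ∀ (h : G) (x : X), C (h • x) = MulAut.conj h • C x
  relIndex_dvd_two : ∀ x, (C x).relIndex (stabilizer G x) ∣ 2

namespace IsRotationPartition

section Basic

variable {G X : Type*} [Group G] [MulAction G X] {C : X → Subgroup G}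

lemma eq_of_mem (hC : IsRotationPartition C) {g : G} (hg : g ≠ 1) {x y : X} (hx : g ∈ C x)
    (hy : g ∈ C y) : x = y :=
  (hC.existsUnique_mem g hg).unique hx hy

lemma finite [Finite G] (hC : IsRotationPartition C) : Finite X := by
  choose g hg hg1 using fun x ↦ (C x).bot_or_exists_ne_one.resolve_left (hC.ne_bot x)
  exact Finite.of_injective g fun x y hxy ↦ hC.eq_of_mem (hg1 x) (hg x) (hxy ▸ hg y)

lemma smul_eq_of_commute (hC : IsRotationPartition C) {g h : G} {x : X} (hg : g ≠ 1)
    (hx : g ∈ C x) (hgh : Commute h g) : h • x = x := by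
  refine hC.eq_of_mem hg ?_ hx
  have hconj : MulAut.conj h • g = g := by
    rw [MulAut.smul_def, MulAut.conj_apply, hgh.eq, mul_inv_cancel_right]
  rw [hC.smul_eq, ← hconj]
  exact Subgroup.smul_mem_pointwise_smul g (MulAut.conj h) (C x) hx

lemma le_stabilizer (hC : IsRotationPartition C) (x : X) : C x ≤ stabilizer G x := by
  intro h hh
  by_cases h1 : h = 1
  · exact h1 ▸ one_mem _
  · exact hC.smul_eq_of_commute h1 hh (Commute.refl h)

lemma center_eq_bot (hC : IsRotationPartition C) (hfix : fixedPoints G X = ∅) :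
    Subgroup.center G = ⊥ := by
  rw [Subgroup.eq_bot_iff_forall]
  by_contra! ⟨z, hz, hz1⟩
  obtain ⟨x, hx⟩ := (hC.existsUnique_mem z hz1).exists
  have hmem : x ∈ fixedPoints G X := fun h ↦
    hC.smul_eq_of_commute hz1 hx (Subgroup.mem_center_iff.mp hz h)
  simp [hfix] at hmem

lemma sq_mem (hC : IsRotationPartition C) {x : X} {k : G} (hk : k • x = x) : k ^ 2 ∈ C x := by
  have hdvd := hC.relIndex_dvd_two x
  have hle := Nat.le_of_dvd two_pos hdvd
  refine (Subgroup.pow_mem_of_relIndex_ne_zero_of_dvd (K := stabilizer G x)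
    (ne_zero_of_dvd_ne_zero two_ne_zero hdvd) hk fun m hm hmle ↦ ?_).1
  obtain rfl | rfl : m = 1 ∨ m = 2 := by omega
  exacts [one_dvd 2, dvd_rfl]

lemma card_inf_smul (hC : IsRotationPartition C) (N : Subgroup G) [N.Normal] (h : G) (x : X) :
    Nat.card (C (h • x) ⊓ N : Subgroup G) = Nat.card (C x ⊓ N : Subgroup G) := by
  have heq : C (h • x) ⊓ N = MulAut.conj h • (C x ⊓ N) := by
    rw [Subgroup.smul_inf, Subgroup.Normal.conj_smul_eq_self h N, hC.smul_eq]
  rw [heq]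
  exact (Nat.card_congr (Subgroup.equivSMul (MulAut.conj h) _).toEquiv).symm

lemma card_smul (hC : IsRotationPartition C) (h : G) (x : X) :
    Nat.card (C (h • x)) = Nat.card (C x) := by
  simpa only [inf_top_eq] using hC.card_inf_smul ⊤ h x

lemma card_eq_of_mem_orbit (hC : IsRotationPartition C) {x y : X} (hy : y ∈ orbit G x) :
    Nat.card (C y) = Nat.card (C x) := by
  obtain ⟨h, rfl⟩ := hy
  exact hC.card_smul h x

lemma relIndex_mul_card (hC : IsRotationPartition C) (x : X) :
    (C x).relIndex (stabilizer G x) * Nat.card (C x) = Nat.card (stabilizer G x) := by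
  have hmul := Subgroup.relIndex_mul_relIndex ⊥ (C x) (stabilizer G x) bot_le (hC.le_stabilizer x)
  rwa [Subgroup.relIndex_bot_left, Subgroup.relIndex_bot_left, mul_comm] at hmul

lemma isCyclic_of_mem_orbit (hC : IsRotationPartition C) {x y : X} (hx : IsCyclic (C x))
    (hy : y ∈ orbit G x) : IsCyclic (C y) := by
  obtain ⟨h, rfl⟩ := hy
  change IsCyclic (C (h • x))
  rw [hC.smul_eq]
  exact (Subgroup.equivSMul (MulAut.conj h) (C x)).isCyclic.mp hx

variable [Finite G]

lemma one_lt_card (hC : IsRotationPartition C) (x : X) : 1 < Nat.card (C x) :=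
  (C x).one_lt_card_iff_ne_bot.mpr (hC.ne_bot x)

lemma toPermHom_orbit_injective_of_odd_card (hC : IsRotationPartition C)
    (hfix : fixedPoints G X = ∅) {x : X} (hodd : Odd (Nat.card (C x))) :
    Function.Injective (toPermHom G (orbit G x)) := by
  set K := (toPermHom G (orbit G x)).ker
  have hKfix : ∀ k ∈ K, ∀ y ∈ orbit G x, k • y = y := fun k hk y hy ↦
    congrArg Subtype.val (Equiv.congr_fun hk (⟨y, hy⟩ : orbit G x))
  have hKstab : K ≤ stabilizer G x := fun k hk ↦ hKfix k hk x (mem_orbit_self x)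
  obtain ⟨h, hx⟩ : ∃ h : G, h • x ≠ x := by
    by_contra! hx
    exact hfix.le (show x ∈ fixedPoints G X from hx)
  have hdisj : C x ⊓ K = ⊥ := by
    rw [Subgroup.eq_bot_iff_forall]
    rintro k ⟨hkx, hkK⟩
    have hsq : k ^ 2 = 1 := by
      by_contra hne
      exact hx (hC.eq_of_mem hne (hC.sq_mem (hKfix k hkK _ (mem_orbit x h))) (pow_mem hkx 2))
    have hdvd2 : orderOf k ∣ 2 := orderOf_dvd_of_pow_eq_one hsq
    have hdvd : orderOf k ∣ Nat.card (C x) := (C x).orderOf_dvd_natCard hkx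
    exact orderOf_eq_one_iff.mp (Nat.eq_one_of_dvd_coprimes hodd.coprime_two_left hdvd2 hdvd)
  have hcard : Nat.card K ≤ 2 := by
    have hdvd := hC.relIndex_dvd_two x
    rw [← Subgroup.relIndex_bot_left, ← hdisj, Subgroup.inf_relIndex_right]
    exact (Subgroup.relIndex_le_of_le_right hKstab (ne_zero_of_dvd_ne_zero two_ne_zero hdvd)).trans
      (Nat.le_of_dvd two_pos hdvd)
  rw [← MonoidHom.ker_eq_bot_iff, eq_bot_iff, ← hC.center_eq_bot hfix]
  exact le_center_of_card_le_two hcard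

end Basic

section ClassEquation

variable {G X : Type*} [Group G] [Finite G] [MulAction G X] {C : X → Subgroup G}

lemma card_eq_one_add_sum [Fintype X] (hC : IsRotationPartition C) (N : Subgroup G) :
    Nat.card N = 1 + ∑ x, (Nat.card (C x ⊓ N : Subgroup G) - 1) := by
  have hcard (H : Subgroup G) : Nat.card H - 1 = Nat.card ((H : Set G) \ {1} : Set G) :=
    (Set.ncard_sdiff_singleton_of_mem H.one_mem).symm
  let e : (Σ x, (((C x ⊓ N : Subgroup G) : Set G) \ {1} : Set G)) → ((N : Set G) \ {1} : Set G) :=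
    fun g ↦ ⟨g.2, g.2.2.1.2, g.2.2.2⟩
  have he : Function.Bijective e := by
    refine ⟨?_, fun ⟨g, hgN, hg1⟩ ↦ ?_⟩
    · rintro ⟨x, g, hgx, hg1⟩ ⟨y, g', hgy, hg1'⟩ heq
      have : g = g' := congrArg Subtype.val heq
      subst this
      obtain rfl : x = y := hC.eq_of_mem hg1 hgx.1 hgy.1
      rfl
    · obtain ⟨x, hx⟩ := (hC.existsUnique_mem g hg1).exists
      exact ⟨⟨x, g, ⟨hx, hgN⟩, hg1⟩, rfl⟩
  have hsub : Nat.card N - 1 = ∑ x, (Nat.card (C x ⊓ N : Subgroup G) - 1) := by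
    simp only [hcard, ← Nat.card_sigma]
    exact (Nat.card_congr (Equiv.ofBijective e he)).symm
  have hpos : 0 < Nat.card N := Nat.card_pos
  omega

lemma card_eq_one_add_sum_orbits [Fintype (orbitRel.Quotient G X)]
    (hC : IsRotationPartition C) (N : Subgroup G) [N.Normal] :
    Nat.card N = 1 + ∑ w : orbitRel.Quotient G X,
      Nat.card (orbit G w.out) * (Nat.card (C w.out ⊓ N : Subgroup G) - 1) := by
  have : Finite X := hC.finite
  have := Fintype.ofFinite X
  rw [hC.card_eq_one_add_sum N, sum_eq_sum_card_orbit_nsmul (G := G)]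
  · simp only [smul_eq_mul]
  · exact fun h x ↦ congrArg (· - 1) (hC.card_inf_smul N h x)

end ClassEquation

section AxisOrder

variable {G X : Type*} [Group G] [Finite G]

/-- The order of the group of rotations about the axis `x`, as a positive integer. -/
noncomputable def axisOrder (C : X → Subgroup G) (x : X) : ℕ+ :=
  ⟨Nat.card (C x), Nat.card_pos⟩

lemma coe_axisOrder (C : X → Subgroup G) (x : X) : (axisOrder C x : ℕ) = Nat.card (C x) := rfl

end AxisOrder

section Poles

variable {G X : Type*} [Group G] [MulAction G X] {C : X → Subgroup G}

/-- Each axis `x` has two poles, which the rotations `C x` about it fix and which the remaining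
elements of its stabilizer exchange. This is the number of orbits of the stabilizer on them. -/
noncomputable def poleMultiplicity (C : X → Subgroup G) (x : X) : ℕ :=
  2 / (C x).relIndex (stabilizer G x)

lemma poleMultiplicity_mul_card_stabilizer (hC : IsRotationPartition C) (x : X) :
    poleMultiplicity C x * Nat.card (stabilizer G x) = 2 * Nat.card (C x) := by
  rw [← hC.relIndex_mul_card, ← mul_assoc, poleMultiplicity,
    Nat.div_mul_cancel (hC.relIndex_dvd_two x)]

lemma poleMultiplicity_pos (hC : IsRotationPartition C) (x : X) : 0 < poleMultiplicity C x :=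
  Nat.div_pos (Nat.le_of_dvd two_pos (hC.relIndex_dvd_two x))
    (Nat.pos_of_dvd_of_pos (hC.relIndex_dvd_two x) two_pos)

lemma poleMultiplicity_smul (hC : IsRotationPartition C) (h : G) (x : X) :
    poleMultiplicity C (h • x) = poleMultiplicity C x := by
  rw [poleMultiplicity, hC.smul_eq, stabilizer_smul_eq_stabilizer_map_conj]
  exact congrArg (2 / ·) (Subgroup.relIndex_pointwise_smul (MulAut.conj h) _ _)

lemma poleMultiplicity_le_two (C : X → Subgroup G) (x : X) : poleMultiplicity C x ≤ 2 :=
  Nat.div_le_self 2 _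

lemma two_mul_card_orbit_mul_card (hC : IsRotationPartition C) (x : X) :
    2 * Nat.card (orbit G x) * Nat.card (C x) = poleMultiplicity C x * Nat.card G := by
  rw [← card_orbit_mul_card_stabilizer G x]
  linear_combination (Nat.card (orbit G x)) * (hC.poleMultiplicity_mul_card_stabilizer x).symm

variable [Finite G] [Fintype (orbitRel.Quotient G X)]

/-- The orders of the groups of rotations about the poles, one for each orbit of `G` on the
poles. -/
noncomputable def poleOrders (C : X → Subgroup G) : Multiset ℕ+ :=
  ∑ w : orbitRel.Quotient G X,
    .replicate (poleMultiplicity C w.out) (axisOrder C w.out)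

lemma mem_poleOrders (hC : IsRotationPartition C) {p : ℕ+} :
    p ∈ poleOrders C ↔ ∃ x, Nat.card (C x) = p := by
  have hmem : p ∈ poleOrders C ↔ ∃ w : orbitRel.Quotient G X, Nat.card (C w.out) = p := by
    simp only [poleOrders, Multiset.mem_sum, Finset.mem_univ, true_and, Multiset.mem_replicate,
      (hC.poleMultiplicity_pos _).ne', ne_eq, not_false_eq_true, ← PNat.coe_inj, coe_axisOrder,
      eq_comm]
  rw [hmem]
  refine ⟨fun ⟨w, hw⟩ ↦ ⟨w.out, hw⟩, fun ⟨x, hx⟩ ↦ ⟨⟦x⟧, ?_⟩⟩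
  rw [← hx, hC.card_eq_of_mem_orbit (out_mem_orbit x)]

lemma axisOrder_mem_poleOrders (hC : IsRotationPartition C) (x : X) :
    axisOrder C x ∈ poleOrders C :=
  hC.mem_poleOrders.mpr ⟨x, rfl⟩

lemma card_eq_or_eq_or_eq (hC : IsRotationPartition C) {p q r : ℕ+}
    (hT : poleOrders C = {p, q, r}) (x : X) :
    Nat.card (C x) = p ∨ Nat.card (C x) = q ∨ Nat.card (C x) = r := by
  have hx := hC.axisOrder_mem_poleOrders x
  simpa only [hT, Multiset.insert_eq_cons, Multiset.mem_cons, Multiset.mem_singleton,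
    ← PNat.coe_inj, coe_axisOrder] using hx

lemma two_le_of_mem_poleOrders (hC : IsRotationPartition C) {p : ℕ+} (hp : p ∈ poleOrders C) :
    2 ≤ p := by
  obtain ⟨x, hx⟩ := hC.mem_poleOrders.mp hp
  rw [← PNat.coe_le_coe, ← hx]
  exact hC.one_lt_card x

lemma two_mul_le_of_mem_poleOrders (hC : IsRotationPartition C) (hfix : fixedPoints G X = ∅)
    {p : ℕ+} (hp : p ∈ poleOrders C) : 2 * (p : ℕ) ≤ Nat.card G := by
  obtain ⟨x, hx⟩ := hC.mem_poleOrders.mp hp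
  have hlt := one_lt_card_orbit hfix x
  have hle := Nat.mul_le_mul_right (Nat.card G) (poleMultiplicity_le_two C x)
  have hmul := hC.two_mul_card_orbit_mul_card x
  rw [hx] at hmul
  nlinarith

open ADEInequality in
theorem card_poleOrders_sub_sumInv (hC : IsRotationPartition C) :
    ((poleOrders C).card : ℚ) - sumInv (poleOrders C) = 2 - 2 / Nat.card G := by
  have hG : (Nat.card G : ℚ) ≠ 0 := Nat.cast_ne_zero.mpr Nat.card_pos.ne'
  have hcard : (poleOrders C).card = ∑ w : orbitRel.Quotient G X, poleMultiplicity C w.out := by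
    simp only [poleOrders, Multiset.card_sum, Multiset.card_replicate]
  have hsumInv : sumInv (poleOrders C) = ∑ w : orbitRel.Quotient G X,
      poleMultiplicity C w.out * (Nat.card (C w.out) : ℚ)⁻¹ := by
    simp only [poleOrders, sumInv_finsetSum, sumInv_replicate, coe_axisOrder]
  have hclass := hC.card_eq_one_add_sum_orbits ⊤
  simp only [Subgroup.card_top, inf_top_eq] at hclass
  rw [hcard, hsumInv]
  push_cast
  rw [← Finset.sum_sub_distrib]
  have hterm (x : X) :
      (poleMultiplicity C x : ℚ) - poleMultiplicity C x * (Nat.card (C x) : ℚ)⁻¹ =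
        2 / Nat.card G * (Nat.card (orbit G x) * (Nat.card (C x) - 1) : ℕ) := by
    have hmul :
        (2 * Nat.card (orbit G x) * Nat.card (C x) : ℚ) = poleMultiplicity C x * Nat.card G := by
      exact_mod_cast hC.two_mul_card_orbit_mul_card x
    have hc : (Nat.card (C x) : ℚ) ≠ 0 := Nat.cast_ne_zero.mpr Nat.card_pos.ne'
    push_cast [Nat.cast_sub (hC.one_lt_card x).le]
    field_simp
    linear_combination (1 - (Nat.card (C x) : ℚ)) * hmul
  simp only [hterm, ← Finset.mul_sum]
  rw [← Nat.cast_sum]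
  field_simp
  push_cast [hclass]
  ring

lemma count_poleOrders (C : X → Subgroup G) (p : ℕ+) :
    (poleOrders C).count p =
      ∑ w : orbitRel.Quotient G X with axisOrder C w.out = p, poleMultiplicity C w.out := by
  simp only [poleOrders, Multiset.count_sum', Multiset.count_replicate, Finset.sum_filter]

-- An axis with `|G| / 2` rotations about it has as many conjugates as its multiplicity, hence
-- two of them if `G` does not fix it.
lemma even_count_poleOrders (hC : IsRotationPartition C) (hfix : fixedPoints G X = ∅) {p : ℕ+}
    (hp : 2 * (p : ℕ) = Nat.card G) : Even ((poleOrders C).count p) := by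
  rw [count_poleOrders]
  refine Finset.even_sum _ fun w hw ↦ ?_
  have hwp : Nat.card (C w.out) = p := congrArg PNat.val (Finset.mem_filter.mp hw).2
  have hle := poleMultiplicity_le_two C w.out
  have hlt := one_lt_card_orbit hfix w.out
  have hmul := hC.two_mul_card_orbit_mul_card w.out
  rw [hwp, ← hp, mul_comm 2, mul_assoc] at hmul
  have heq := Nat.eq_of_mul_eq_mul_right (by positivity) hmul
  exact ⟨1, by omega⟩

lemma poleOrders_cases (hC : IsRotationPartition C) [Nontrivial G] (hfix : fixedPoints G X = ∅) :
    (Nat.card G = 12 ∧ poleOrders C = {2, 3, 3}) ∨ (Nat.card G = 24 ∧ poleOrders C = {2, 3, 4}) ∨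
      (Nat.card G = 60 ∧ poleOrders C = {2, 3, 5}) := by
  rcases spherical_triple_of_card_sub_sumInv_eq Finite.one_lt_card
    (fun _ ↦ hC.two_le_of_mem_poleOrders) (fun _ ↦ hC.two_mul_le_of_mem_poleOrders hfix)
    hC.card_poleOrders_sub_sumInv with ⟨r, hT, hr⟩ | h | h | h
  · have heven := hC.even_count_poleOrders hfix hr
    rw [hT] at heven
    by_cases h2 : r = 2
    · subst h2
      exact absurd heven (by decide)
    · simp [h2] at heven
  · exact .inl h.symm
  · exact .inr (.inl h.symm)
  · exact .inr (.inr h.symm)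

section Nodup

lemma sum_poleMultiplicity_le_one (hT : (poleOrders C).Nodup) (p : ℕ+) :
    ∑ w : orbitRel.Quotient G X with axisOrder C w.out = p, poleMultiplicity C w.out ≤ 1 := by
  rw [← count_poleOrders]
  exact Multiset.nodup_iff_count_le_one.mp hT p

lemma poleMultiplicity_eq_one (hC : IsRotationPartition C) (hT : (poleOrders C).Nodup) (x : X) :
    poleMultiplicity C x = 1 := by
  have hout (w : orbitRel.Quotient G X) : poleMultiplicity C w.out ≤ 1 := by
    refine le_trans ?_ (sum_poleMultiplicity_le_one hT (axisOrder C w.out))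
    exact Finset.single_le_sum (f := fun w : orbitRel.Quotient G X ↦ poleMultiplicity C w.out)
      (fun _ _ ↦ Nat.zero_le _) (Finset.mem_filter.mpr ⟨Finset.mem_univ w, rfl⟩)
  obtain ⟨h, hx : h • x = (⟦x⟧ : orbitRel.Quotient G X).out⟩ :=
    out_mem_orbit (G := G) x
  exact le_antisymm (hC.poleMultiplicity_smul h x ▸ hx ▸ hout ⟦x⟧) (hC.poleMultiplicity_pos x)

lemma out_injective (hC : IsRotationPartition C) (hT : (poleOrders C).Nodup) :
    Function.Injective fun w : orbitRel.Quotient G X ↦ axisOrder C w.out := by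
  intro w v (hwv : axisOrder C w.out = axisOrder C v.out)
  have hle := sum_poleMultiplicity_le_one hT (axisOrder C v.out)
  simp only [hC.poleMultiplicity_eq_one hT, Finset.sum_const, smul_eq_mul, mul_one] at hle
  exact Finset.card_le_one.mp hle w (by simp [hwv]) v (by simp)

lemma mem_orbit_of_card_eq (hC : IsRotationPartition C) (hT : (poleOrders C).Nodup) {x y : X}
    (hxy : Nat.card (C x) = Nat.card (C y)) : y ∈ orbit G x := by
  have hout : (⟦y⟧ : orbitRel.Quotient G X) = ⟦x⟧ := by
    refine hC.out_injective hT (PNat.coe_injective ?_)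
    simp only [coe_axisOrder]
    rw [hC.card_eq_of_mem_orbit (out_mem_orbit x), hC.card_eq_of_mem_orbit (out_mem_orbit y), hxy]
  exact Quotient.exact hout

lemma two_mul_card_orbit_mul_card_eq (hC : IsRotationPartition C) (hT : (poleOrders C).Nodup)
    (x : X) : 2 * Nat.card (orbit G x) * Nat.card (C x) = Nat.card G := by
  rw [hC.two_mul_card_orbit_mul_card, hC.poleMultiplicity_eq_one hT, one_mul]

lemma card_stabilizer_eq_two_mul (hC : IsRotationPartition C) (hT : (poleOrders C).Nodup)
    (x : X) : Nat.card (stabilizer G x) = 2 * Nat.card (C x) := by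
  rw [← hC.poleMultiplicity_mul_card_stabilizer, hC.poleMultiplicity_eq_one hT, one_mul]

lemma exists_subset_card_normal_eq (hC : IsRotationPartition C) (hT : (poleOrders C).Nodup)
    (hprime : ∀ p ∈ poleOrders C, (p : ℕ).Prime) (N : Subgroup G) [N.Normal] :
    ∃ D ⊆ (poleOrders C).toFinset,
      Nat.card N = 1 + ∑ p ∈ D, Nat.card G / (2 * p) * ((p : ℕ) - 1) := by
  classical
  let W : Finset (orbitRel.Quotient G X) := {w | C w.out ≤ N}
  refine ⟨W.image fun w ↦ axisOrder C w.out, ?_, ?_⟩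
  · intro p hp
    obtain ⟨w, -, rfl⟩ := Finset.mem_image.mp hp
    exact Multiset.mem_toFinset.mpr (hC.axisOrder_mem_poleOrders w.out)
  · rw [hC.card_eq_one_add_sum_orbits N, Finset.sum_image (hC.out_injective hT).injOn,
      Finset.sum_filter]
    congr 1
    refine Finset.sum_congr rfl fun w _ ↦ ?_
    have horbit : Nat.card G / (2 * Nat.card (C w.out)) = Nat.card (orbit G w.out) := by
      rw [← hC.two_mul_card_orbit_mul_card_eq hT w.out, mul_right_comm]
      exact Nat.mul_div_cancel_left _ (by have := hC.one_lt_card w.out; omega)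
    rw [coe_axisOrder, horbit]
    split_ifs with hw
    · rw [inf_eq_left.mpr hw]
    · have hdvd := Subgroup.card_dvd_of_le (inf_le_left : C w.out ⊓ N ≤ C w.out)
      rcases (Nat.dvd_prime (hprime _ (hC.axisOrder_mem_poleOrders w.out))).mp hdvd with h1 | htop
      · rw [h1, Nat.sub_self, mul_zero]
      · exact absurd (inf_eq_left.mp (Subgroup.eq_of_le_of_card_ge inf_le_left htop.ge)) hw

lemma isSimpleGroup_of_poleOrders_eq (hC : IsRotationPartition C) (hG : Nat.card G = 60)
    (hT : poleOrders C = {2, 3, 5}) : IsSimpleGroup G := by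
  have hnodup : (poleOrders C).Nodup := by rw [hT]; decide
  have hprime : ∀ p ∈ poleOrders C, (p : ℕ).Prime := by rw [hT]; decide
  have : Nontrivial G := Finite.one_lt_card_iff_nontrivial.mp (by omega)
  refine ⟨fun N _ ↦ ?_⟩
  obtain ⟨D, hD, hcard⟩ := hC.exists_subset_card_normal_eq hnodup hprime N
  have hdvd : Nat.card N ∣ 60 := hG ▸ N.card_subgroup_dvd_card
  have hsum : ∀ D ∈ ({2, 3, 5} : Finset ℕ+).powerset,
      1 + ∑ p ∈ D, 60 / (2 * p) * ((p : ℕ) - 1) ∣ 60 →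
        1 + ∑ p ∈ D, 60 / (2 * p) * ((p : ℕ) - 1) = 1 ∨
          1 + ∑ p ∈ D, 60 / (2 * p) * ((p : ℕ) - 1) = 60 := by
    decide
  rw [hG] at hcard
  rw [hT] at hD
  rw [hcard] at hdvd
  have hN := hsum D (Finset.mem_powerset.mpr hD) hdvd
  rw [← hcard] at hN
  exact hN.imp (Subgroup.eq_bot_of_card_eq N) fun h ↦ N.eq_top_of_card_eq (h.trans hG.symm)

lemma normalizer_stabilizer_ne (hC : IsRotationPartition C) (hT : (poleOrders C).Nodup)
    {x : X} (hx : Nat.card (C x) = 2) (heven : ∀ y, Even (Nat.card (C y)) → Nat.card (C y) = 2) :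
    Subgroup.normalizer (stabilizer G x : Set G) ≠ stabilizer G x := by
  set S := stabilizer G x
  have hS (y : X) (hy : Nat.card (C y) = 2) : Nat.card (stabilizer G y) = 2 ^ 2 := by
    rw [hC.card_stabilizer_eq_two_mul hT, hy]; rfl
  have : Fact (Nat.Prime 2) := ⟨Nat.prime_two⟩
  have hcomm : IsMulCommutative S := IsPGroup.isMulCommutative_of_card_eq_prime_sq (hS x hx)
  obtain ⟨s, hsS, hsx⟩ : ∃ s ∈ S, s ∉ C x := by
    by_contra! hle
    have := Subgroup.card_le_of_le (show S ≤ C x from hle)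
    rw [hS x hx, hx] at this
    omega
  have hs1 : s ≠ 1 := fun h ↦ hsx (h ▸ one_mem _)
  obtain ⟨y, hsy⟩ := (hC.existsUnique_mem s hs1).exists
  have hy : Nat.card (C y) = 2 := by
    refine heven y (even_iff_two_dvd.mpr (dvd_trans ?_ ((C y).orderOf_dvd_natCard hsy)))
    have hdvd : orderOf s ∣ 2 ^ 2 := hS x hx ▸ S.orderOf_dvd_natCard hsS
    obtain ⟨k, -, hk⟩ := (Nat.dvd_prime_pow Nat.prime_two).mp hdvd
    rw [hk]
    refine dvd_pow_self 2 fun hk0 ↦ hs1 ?_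
    rwa [hk0, pow_zero, orderOf_eq_one_iff] at hk
  obtain ⟨h, rfl : h • x = y⟩ := hC.mem_orbit_of_card_eq hT (hx.trans hy.symm)
  have heq : S = stabilizer G (h • x) := by
    refine Subgroup.eq_of_le_of_card_ge (fun k hk ↦ ?_) (by rw [hS x hx, hS _ hy])
    refine hC.smul_eq_of_commute hs1 hsy ?_
    exact congrArg Subtype.val (mul_comm' (⟨k, hk⟩ : S) ⟨s, hsS⟩)
  have hmem : h ∈ Subgroup.normalizer (S : Set G) := by
    rw [Subgroup.mem_normalizer_iff_map_conj_eq]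
    exact (stabilizer_smul_eq_stabilizer_map_conj h x).symm.trans heq.symm
  intro hnorm
  have hhx : h • x = x := hnorm.le hmem
  exact hsx (hhx ▸ hsy)

end Nodup

section Classification

lemma nonempty_mulEquiv_alternatingGroup_four (hC : IsRotationPartition C)
    (hfix : fixedPoints G X = ∅) (hG : Nat.card G = 12) (hT : 3 ∈ poleOrders C) :
    Nonempty (G ≃* alternatingGroup (Fin 4)) := by
  obtain ⟨x, hx⟩ := hC.mem_poleOrders.mp hT
  have hfaithful := hC.toPermHom_orbit_injective_of_odd_card hfix (x := x) (by rw [hx]; decide)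
  have : Finite (orbit G x) := Set.finite_range _
  have hle := Nat.card_le_card_of_injective _ hfaithful
  rw [hG, Nat.card_perm] at hle
  have horbit : Nat.card (orbit G x) = 4 := by
    have hmul := hC.two_mul_card_orbit_mul_card x
    rw [hx, hG, PNat.val_ofNat] at hmul
    have hpos := hC.poleMultiplicity_pos x
    have hle_two := poleMultiplicity_le_two C x
    obtain h2 | h4 : Nat.card (orbit G x) = 2 ∨ Nat.card (orbit G x) = 4 := by omega
    · rw [h2] at hle
      contradiction
    · exact h4
  exact nonempty_mulEquiv_alternatingGroup_fin hfaithful horbit (by rw [hG]; rfl)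

lemma nonempty_mulEquiv_perm_four (hC : IsRotationPartition C) (hfix : fixedPoints G X = ∅)
    (hG : Nat.card G = 24) (hT : 3 ∈ poleOrders C) (hnodup : (poleOrders C).Nodup) :
    Nonempty (G ≃* Equiv.Perm (Fin 4)) := by
  obtain ⟨x, hx⟩ := hC.mem_poleOrders.mp hT
  have hfaithful := hC.toPermHom_orbit_injective_of_odd_card hfix (x := x) (by rw [hx]; decide)
  have : Finite (orbit G x) := Set.finite_range _
  have horbit : Nat.card (orbit G x) = 4 := by
    have hmul := hC.two_mul_card_orbit_mul_card_eq hnodup x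
    rw [hx, hG, PNat.val_ofNat] at hmul
    omega
  exact nonempty_mulEquiv_perm_fin hfaithful horbit hG

lemma nonempty_mulEquiv_alternatingGroup_five (hC : IsRotationPartition C)
    (hG : Nat.card G = 60) (hT : poleOrders C = {2, 3, 5}) :
    Nonempty (G ≃* alternatingGroup (Fin 5)) := by
  have hnodup : (poleOrders C).Nodup := by rw [hT]; decide
  have := hC.isSimpleGroup_of_poleOrders_eq hG hT
  obtain ⟨x, hx⟩ := hC.mem_poleOrders.mp (show 2 ∈ poleOrders C by rw [hT]; decide)
  have hcard : Nat.card (stabilizer G x) = 4 := by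
    rw [hC.card_stabilizer_eq_two_mul hnodup, hx]; rfl
  refine nonempty_mulEquiv_alternatingGroup_five_of_normalizer_ne hG hcard
    (hC.normalizer_stabilizer_ne hnodup hx fun y hy ↦ ?_)
  rcases hC.card_eq_or_eq_or_eq hT y with h | h | h <;> rw [h] at hy ⊢ <;> revert hy <;> decide

lemma isCyclic_of_forall_prime (hC : IsRotationPartition C)
    (hprime : ∀ p ∈ poleOrders C, (p : ℕ).Prime) (x : X) : IsCyclic (C x) :=
  isCyclic_of_card_prime (hprime _ (hC.axisOrder_mem_poleOrders x))

lemma isCyclic_of_orderOf_eq_four (hC : IsRotationPartition C) (hT : poleOrders C = {2, 3, 4})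
    {g : G} (hg : orderOf g = 4) (x : X) : IsCyclic (C x) := by
  have hcard := hC.card_eq_or_eq_or_eq hT
  have hg1 : g ≠ 1 := by rintro rfl; simp at hg
  obtain ⟨y, hgy⟩ := (hC.existsUnique_mem g hg1).exists
  have hy : Nat.card (C y) = 4 := by
    have hdvd : 4 ∣ Nat.card (C y) := hg ▸ (C y).orderOf_dvd_natCard hgy
    rcases hcard y with h | h | h <;> rw [h] at hdvd ⊢ <;> revert hdvd <;> decide
  have hcyclic : IsCyclic (C y) :=
    isCyclic_of_orderOf_eq_card (⟨g, hgy⟩ : C y) (by rw [Subgroup.orderOf_mk, hg, hy])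
  rcases hcard x with h | h | h
  · exact isCyclic_of_card_prime (h ▸ Nat.prime_two)
  · exact isCyclic_of_card_prime (h ▸ Nat.prime_three)
  · have hnodup : (poleOrders C).Nodup := by rw [hT]; decide
    exact hC.isCyclic_of_mem_orbit hcyclic (hC.mem_orbit_of_card_eq hnodup (hy.trans h.symm))

end Classification

end Poles

theorem nonempty_mulEquiv_and_isCyclic {G X : Type*} [Group G] [Finite G] [Nontrivial G]
    [MulAction G X] {C : X → Subgroup G} (hC : IsRotationPartition C) (hfix : fixedPoints G X = ∅) :
    (Nonempty (G ≃* alternatingGroup (Fin 4)) ∨ Nonempty (G ≃* Equiv.Perm (Fin 4)) ∨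
      Nonempty (G ≃* alternatingGroup (Fin 5))) ∧ ∀ x, IsCyclic (C x) := by
  have : Finite X := hC.finite
  have := Fintype.ofFinite (orbitRel.Quotient G X)
  rcases hC.poleOrders_cases hfix with ⟨hG, hT⟩ | ⟨hG, hT⟩ | ⟨hG, hT⟩
  · have hiso := hC.nonempty_mulEquiv_alternatingGroup_four hfix hG (by rw [hT]; decide)
    exact ⟨.inl hiso, hC.isCyclic_of_forall_prime (by rw [hT]; decide)⟩
  · obtain ⟨e⟩ :=
      hC.nonempty_mulEquiv_perm_four hfix hG (by rw [hT]; decide) (by rw [hT]; decide)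
    have hg : orderOf (e.symm (finRotate 4)) = 4 := by
      rw [MulEquiv.orderOf_eq, orderOf_finRotate]
    exact ⟨.inr (.inl ⟨e⟩), hC.isCyclic_of_orderOf_eq_four hT hg⟩
  · have hiso := hC.nonempty_mulEquiv_alternatingGroup_five hG hT
    exact ⟨.inr (.inr hiso), hC.isCyclic_of_forall_prime (by rw [hT]; decide)⟩

end IsRotationPartition

section AxisCent

variable {G V : Type*} [Group G] [AddCommGroup V] [DistribMulAction G V]

lemma mem_axisCent {A : AddSubgroup V} {h : G} : h ∈ axisCent G A ↔ ∀ v ∈ A, h • v = v :=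
  Iff.rfl

lemma axisCent_smul (h : G) (A : AddSubgroup V) :
    axisCent G (h • A) = MulAut.conj h • axisCent G A := by
  ext k
  rw [Subgroup.mem_pointwise_smul_iff_inv_smul_mem, ← map_inv, MulAut.smul_def, MulAut.conj_apply,
    inv_inv, mem_axisCent, mem_axisCent]
  refine ⟨fun hk v hv ↦ ?_, fun hk v hv ↦ ?_⟩
  · rw [mul_smul, mul_smul, inv_smul_eq_iff]
    exact hk (h • v) (AddSubgroup.smul_mem_pointwise_smul v h A hv)
  · have hv' := hk (h⁻¹ • v) (AddSubgroup.mem_pointwise_smul_iff_inv_smul_mem.mp hv)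
    rwa [mul_smul, mul_smul, smul_inv_smul, smul_left_cancel_iff] at hv'

end AxisCent

namespace Rotation3DModule

variable {G V : Type*} [Group G] [AddCommGroup V] [DistribMulAction G V]
  (M : Rotation3DModule G V)

lemma smul_axis {g : G} (hg : g ≠ 1) (h : G) : h • M.axis g = M.axis (h * g * h⁻¹) := by
  by_cases hh : h = 1
  · simp [hh]
  · exact M.axis_conj g h hg hh

/-- The axes of a rotation module, as a set of subgroups of `V` permuted by `G`. -/
def axes : SubMulAction G (AddSubgroup V) where
  carrier := {A | ∃ g ≠ 1, M.axis g = A}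
  smul_mem' := by
    rintro h _ ⟨g, hg, rfl⟩
    exact ⟨h * g * h⁻¹, by rwa [ne_eq, conj_eq_one_iff], (M.smul_axis hg h).symm⟩

lemma mem_axisCent_axis_iff {g h : G} (hg : g ≠ 1) (hh : h ≠ 1) :
    h ∈ axisCent G (M.axis g) ↔ M.axis h = M.axis g :=
  M.cent_iff g h hg hh

lemma relIndex_axisCent_axisNorm_dvd_two {g : G} (hg : g ≠ 1) :
    (axisCent G (M.axis g)).relIndex (axisNorm G (M.axis g)) ∣ 2 := by
  have hinv {h : G} (hN : h ∈ axisNorm G (M.axis g)) (hC : h ∉ axisCent G (M.axis g)) :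
      ∀ v ∈ M.axis g, h • v = -v := by
    have hh : h ≠ 1 := fun h1 ↦ hC (h1 ▸ one_mem _)
    exact M.norm_inverts g h hg hh hN hC
  rw [Subgroup.relIndex_dvd_two_iff]
  by_cases hle : axisNorm G (M.axis g) ≤ axisCent G (M.axis g)
  · exact ⟨1, one_mem _, fun b hb ↦ .inr (hle hb)⟩
  obtain ⟨a, haN, haC⟩ := SetLike.not_le_iff_exists.mp hle
  refine ⟨a, haN, fun b hbN ↦ or_iff_not_imp_right.mpr fun hbC v hv ↦ ?_⟩
  rw [mul_smul, hinv haN haC v hv, smul_neg, hinv hbN hbC v hv, neg_neg]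

theorem isRotationPartition :
    IsRotationPartition fun A : M.axes ↦ axisCent G (A : AddSubgroup V) where
  existsUnique_mem g hg := by
    refine ⟨⟨M.axis g, g, hg, rfl⟩, (M.mem_axisCent_axis_iff hg hg).mpr rfl, ?_⟩
    rintro ⟨_, k, hk, rfl⟩ hmem
    exact Subtype.ext ((M.mem_axisCent_axis_iff hk hg).mp hmem).symm
  ne_bot := by
    rintro ⟨_, g, hg, rfl⟩ hbot
    exact hg ((Subgroup.eq_bot_iff_forall _).mp hbot g ((M.mem_axisCent_axis_iff hg hg).mpr rfl))
  smul_eq h A := axisCent_smul h (A : AddSubgroup V)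
  relIndex_dvd_two := by
    rintro ⟨_, g, hg, rfl⟩
    rw [SubMulAction.stabilizer_of_subMul]
    exact M.relIndex_axisCent_axisNorm_dvd_two hg

lemma fixedPoints_axes_eq_empty (h : ∀ g : G, g ≠ 1 → ∃ h : G, h • M.axis g ≠ M.axis g) :
    fixedPoints G M.axes = ∅ := by
  refine Set.eq_empty_of_forall_notMem ?_
  rintro ⟨_, g, hg, rfl⟩ hfix
  obtain ⟨k, hk⟩ := h g hg
  exact hk (congrArg Subtype.val (hfix k))

end Rotation3DModule

/-- a nontrivial finite group with a nonaxial 3D-rotation module is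
isomorphic to `Alt(4)`, `Sym(4)`, or `Alt(5)`, and the centralizer of each axis is cyclic. -/
theorem stmt14 {G V : Type*} [Group G] [Finite G] [Nontrivial G]
    [AddCommGroup V] [DistribMulAction G V] (M : Rotation3DModule G V)
    (hnonaxial : ∀ g : G, g ≠ 1 → ∃ h : G, h • M.axis g ≠ M.axis g) :
    (Nonempty (G ≃* alternatingGroup (Fin 4)) ∨ Nonempty (G ≃* Equiv.Perm (Fin 4)) ∨
      Nonempty (G ≃* alternatingGroup (Fin 5))) ∧
    ∀ g : G, g ≠ 1 → IsCyclic (axisCent G (M.axis g)) := by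
  obtain ⟨hiso, hcyc⟩ :=
    M.isRotationPartition.nonempty_mulEquiv_and_isCyclic (M.fixedPoints_axes_eq_empty hnonaxial)
  exact ⟨hiso, fun g hg ↦ hcyc ⟨M.axis g, g, hg, rfl⟩⟩
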